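/- arXiv:1903.03361 — 2 statements merged into one kernel-verified Lean document; each statement's English description precedes it below -/
import Mathlib

section
/- Let k be a field of characteristic zero, let 𝔉 be the free Lie algebra over k on four generators v₁, v₂, w₁, w₂, let I be the Lie ideal of 𝔉 generated by the single element ⁅v₁,v₂⁆ + ⁅w₁,w₂⁆, and let L = 𝔉/I, with v̄₁, v̄₂, w̄₁, w̄₂ the images of the generators. Then ⁅w̄₁, ⁅v̄₁, v̄₂⁆⁆ does not lie in Fil⁴L; that is, its image in Fil³L/Fil⁴L is nonzero. -/
/-!
The relator lies in the kernel of a homomorphism `φ` from the free Lie algebra to the strictly upper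
triangular `4 × 4` matrices, given by
`v₁ ↦ E₂₃`, `v₂ ↦ -E₃₄`, `w₁ ↦ E₁₂ + E₂₃`, `w₂ ↦ E₃₄`,
since `⁅E₂₃, -E₃₄⁆ = -E₂₄` and `⁅E₁₂ + E₂₃, E₃₄⁆ = E₂₄`. It sends `⁅w₁, ⁅v₁, v₂⁆⁆` to
`-E₁₄ ≠ 0`. On the other hand, the matrices supported on `j ≥ i + n` form a multiplicative
filtration (`mul_mem_diagFil`), which vanishes for `n = 4`; hence every element of `Fil⁴L` has a
lift to the free Lie algebra that is killed by `φ` (`exists_lift_of_mem_lcs`). Any two lifts differ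
by an element of `I ⊆ ker φ` (`surfaceIdeal_le_ker`), so `⁅w̄₁, ⁅v̄₁, v̄₂⁆⁆ ∉ Fil⁴L`.
-/

open FreeLieAlgebra

/-- The element `⁅v₁, v₂⁆ + ⁅w₁, w₂⁆` of the free Lie algebra over `k` on the four
generators `v₁ = of k 0`, `v₂ = of k 1`, `w₁ = of k 2`, `w₂ = of k 3`. -/
noncomputable def surfaceRelator (k : Type*) [Field k] : FreeLieAlgebra k (Fin 4) :=
  ⁅of k (0 : Fin 4), of k (1 : Fin 4)⁆ + ⁅of k (2 : Fin 4), of k (3 : Fin 4)⁆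

/-- The Lie ideal `I` of the free Lie algebra on four generators, generated by the single
element `⁅v₁, v₂⁆ + ⁅w₁, w₂⁆`. -/
noncomputable def surfaceIdeal (k : Type*) [Field k] : LieIdeal k (FreeLieAlgebra k (Fin 4)) :=
  LieSubmodule.lieSpan k (FreeLieAlgebra k (Fin 4)) {surfaceRelator k}

/-- The quotient Lie algebra `L = 𝔉/I`. -/
abbrev SurfaceLieAlgebra (k : Type*) [Field k] : Type _ :=
  FreeLieAlgebra k (Fin 4) ⧸ surfaceIdeal k

/-- The images `v̄₁, v̄₂, w̄₁, w̄₂` of the four generators in the quotient `L = 𝔉/I`. -/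
noncomputable def surfaceGen (k : Type*) [Field k] (i : Fin 4) : SurfaceLieAlgebra k :=
  LieSubmodule.Quotient.mk (N := surfaceIdeal k) (of k i)

section

-- Square matrices carry the commutator bracket.
attribute [local instance] LieRing.ofAssociativeRing

/-- The `4 × 4` matrices whose entries vanish unless `j ≥ i + n`, i.e. those supported on or above
the `n`-th superdiagonal. -/
def diagFil (k : Type*) [Field k] (n : ℕ) : Submodule k (Matrix (Fin 4) (Fin 4) k) where
  carrier := {A | ∀ i j : Fin 4, (j : ℕ) < i + n → A i j = 0}
  zero_mem' := fun _ _ _ => rfl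
  add_mem' := fun hA hB i j h => by simp [hA i j h, hB i j h]
  smul_mem' := fun c A hA i j h => by simp [hA i j h]

theorem mul_mem_diagFil {k : Type*} [Field k] {m n : ℕ} {A B : Matrix (Fin 4) (Fin 4) k}
    (hA : A ∈ diagFil k m) (hB : B ∈ diagFil k n) : A * B ∈ diagFil k (m + n) := by
  intro i j h
  rw [Matrix.mul_apply]
  refine Finset.sum_eq_zero fun l _ => ?_
  by_cases hl : (l : ℕ) < i + m
  · rw [hA i l hl, zero_mul]
  · rw [hB l j (by omega), mul_zero]

theorem lie_mem_diagFil {k : Type*} [Field k] {m n : ℕ} {A B : Matrix (Fin 4) (Fin 4) k}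
    (hA : A ∈ diagFil k m) (hB : B ∈ diagFil k n) : ⁅A, B⁆ ∈ diagFil k (m + n) := by
  rw [Ring.lie_def]
  exact sub_mem (mul_mem_diagFil hA hB) (add_comm n m ▸ mul_mem_diagFil hB hA)

/-- The Lie algebra of strictly upper triangular `4 × 4` matrices. -/
def strictUpper (k : Type*) [Field k] : LieSubalgebra k (Matrix (Fin 4) (Fin 4) k) where
  toSubmodule := diagFil k 1
  lie_mem' := fun hA hB i j h => lie_mem_diagFil hA hB i j (by omega)

/-- The images `E₂₃, -E₃₄, E₁₂ + E₂₃, E₃₄` of `v₁, v₂, w₁, w₂`. -/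
def genMatrix (k : Type*) [Field k] : Fin 4 → Matrix (Fin 4) (Fin 4) k :=
  ![!![0, 0, 0, 0; 0, 0, 1, 0; 0, 0, 0, 0; 0, 0, 0, 0],
    !![0, 0, 0, 0; 0, 0, 0, 0; 0, 0, 0, -1; 0, 0, 0, 0],
    !![0, 1, 0, 0; 0, 0, 1, 0; 0, 0, 0, 0; 0, 0, 0, 0],
    !![0, 0, 0, 0; 0, 0, 0, 0; 0, 0, 0, 1; 0, 0, 0, 0]]

theorem genMatrix_mem (k : Type*) [Field k] (a : Fin 4) : genMatrix k a ∈ strictUpper k := by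
  intro i j h
  fin_cases a <;> fin_cases i <;> fin_cases j <;> simp [genMatrix] at h ⊢

/-- The homomorphism `φ` from the free Lie algebra to the strictly upper triangular matrices. -/
noncomputable def toStrictUpper (k : Type*) [Field k] :
    FreeLieAlgebra k (Fin 4) →ₗ⁅k⁆ strictUpper k :=
  FreeLieAlgebra.lift k fun a => ⟨genMatrix k a, genMatrix_mem k a⟩

theorem toStrictUpper_of (k : Type*) [Field k] (a : Fin 4) :
    (toStrictUpper k (of k a) : Matrix (Fin 4) (Fin 4) k) = genMatrix k a := by
  simp [toStrictUpper]

theorem surfaceIdeal_le_ker (k : Type*) [Field k] : surfaceIdeal k ≤ (toStrictUpper k).ker := by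
  refine LieSubmodule.lieSpan_le.mpr (Set.singleton_subset_iff.mpr ?_)
  rw [SetLike.mem_coe, LieHom.mem_ker]
  apply Subtype.ext
  simp only [surfaceRelator, map_add, LieHom.map_lie, AddMemClass.coe_add,
    LieSubalgebra.coe_bracket, toStrictUpper_of, Ring.lie_def]
  ext i j
  fin_cases i <;> fin_cases j <;> simp [genMatrix]

/-- The `(1, 4)` entry of `φ ⁅w₁, ⁅v₁, v₂⁆⁆ = ⁅E₁₂ + E₂₃, -E₂₄⁆ = -E₁₄`. -/
theorem toStrictUpper_triple (k : Type*) [Field k] :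
    (toStrictUpper k ⁅of k (2 : Fin 4), ⁅of k (0 : Fin 4), of k (1 : Fin 4)⁆⁆ :
      Matrix (Fin 4) (Fin 4) k) 0 3 = -1 := by
  simp only [LieHom.map_lie, LieSubalgebra.coe_bracket, toStrictUpper_of, Ring.lie_def]
  simp [genMatrix]

/-- Elements of `Fil^{n+1}L` have lifts whose image under `φ` lies in the `(n+1)`-st step of the
matrix filtration. Asking only for some lift avoids factoring `φ` through `L`. -/
theorem exists_lift_of_mem_lcs (k : Type*) [Field k] (n : ℕ) :
    ∀ x ∈ LieModule.lowerCentralSeries k (SurfaceLieAlgebra k) (SurfaceLieAlgebra k) n,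
      ∃ y : FreeLieAlgebra k (Fin 4), LieSubmodule.Quotient.mk (N := surfaceIdeal k) y = x ∧
        (toStrictUpper k y : Matrix (Fin 4) (Fin 4) k) ∈ diagFil k (n + 1) := by
  induction n with
  | zero =>
    intro x _
    obtain ⟨y, rfl⟩ := LieSubmodule.Quotient.surjective_mk' (surfaceIdeal k) x
    exact ⟨y, rfl, (toStrictUpper k y).2⟩
  | succ n ih =>
    intro x hx
    rw [LieModule.lowerCentralSeries_succ, ← LieSubmodule.mem_toSubmodule,
      LieSubmodule.lieIdeal_oper_eq_linear_span'] at hx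
    induction hx using Submodule.span_induction with
    | mem x hx =>
      obtain ⟨a, -, b, hb, rfl⟩ := hx
      obtain ⟨y, rfl⟩ := LieSubmodule.Quotient.surjective_mk' (surfaceIdeal k) a
      obtain ⟨z, rfl, hz⟩ := ih b hb
      refine ⟨⁅y, z⁆, LieSubmodule.Quotient.mk_bracket _ y z, ?_⟩
      rw [LieHom.map_lie, LieSubalgebra.coe_bracket, add_comm (n + 1) 1]
      exact lie_mem_diagFil (toStrictUpper k y).2 hz
    | zero => exact ⟨0, rfl, by simp⟩
    | add a b _ _ ha hb =>
      obtain ⟨y, rfl, hy⟩ := ha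
      obtain ⟨z, rfl, hz⟩ := hb
      exact ⟨y + z, rfl, by simpa using add_mem hy hz⟩
    | smul c a _ ha =>
      obtain ⟨y, rfl, hy⟩ := ha
      exact ⟨c • y, rfl, by simpa using Submodule.smul_mem _ c hy⟩

end

/-- In `L = 𝔉/I`, the element `⁅w̄₁, ⁅v̄₁, v̄₂⁆⁆` does not lie in `Fil⁴L`, where `Fil`
denotes the lower central series (so `Fil⁴L = LieModule.lowerCentralSeries k L L 3`);
that is, its image in `Fil³L/Fil⁴L` is nonzero. -/
theorem stmt_1 (k : Type*) [Field k] [CharZero k] :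
    ⁅surfaceGen k 2, ⁅surfaceGen k 0, surfaceGen k 1⁆⁆ ∉
      LieModule.lowerCentralSeries k (SurfaceLieAlgebra k) (SurfaceLieAlgebra k) 3 := by
  intro h
  obtain ⟨y, hy, hφ⟩ := exists_lift_of_mem_lcs k 3 _ h
  have hmem : y - ⁅of k (2 : Fin 4), ⁅of k (0 : Fin 4), of k (1 : Fin 4)⁆⁆ ∈ surfaceIdeal k := by
    rw [← LieSubmodule.Quotient.mk_eq_zero]
    exact sub_eq_zero.mpr hy
  have hker := surfaceIdeal_le_ker k hmem
  rw [LieHom.mem_ker, map_sub, sub_eq_zero] at hker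
  have h03 := hφ 0 3 (by decide)
  rw [hker, toStrictUpper_triple] at h03
  exact neg_ne_zero.mpr one_ne_zero h03
end

section
/- Let k be a field, g ≥ 1 an integer, L a Lie algebra over k, and w₁, …, w_{2g} ∈ L elements whose images span the quotient vector space L/⁅L,L⁆. Let q ≥ 2 be an integer and let y ∈ Fil^{q+1}L. Then there exist elements y₁, …, y_{2g} ∈ Fil^{q}L such that (Σ_{i=1}^{g} ⁅w_{2i−1}, w_{2i}⁆ + y) − Σ_{i=1}^{g} ⁅w_{2i−1} + y_{2i−1}, w_{2i} + y_{2i}⁆ ∈ Fil^{q+2}L. -/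
/-!
Write `F n = lowerCentralSeries k L L n`. The elements `y ∈ F (n + 1)` are sums of brackets `⁅x, m⁆`
with `m ∈ F n`. Writing `x` as a combination of the `w j` plus an element of `F 1`, and using
`⁅F 1, F n⁆ ⊆ F (n + 2)` (Jacobi), one gets `y ≡ ∑ j, ⁅w j, z j⁆` modulo `F (n + 2)` with all
`z j ∈ F n` (`exists_sum_lie_sub_mem`). The modifications `Y (2i) = -z (2i+1)` and
`Y (2i+1) = z (2i)` make the linear terms of the modified symplectic sum equal to
`∑ j, ⁅w j, z j⁆`. The quadratic terms `⁅Y (2i), Y (2i+1)⁆` lie in `⁅F 1, F n⁆ ⊆ F (n + 2)`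
because `n ≥ 1`.
-/

/-- The "symplectic" sum `∑_{i=1}^{g} ⁅w_{2i-1}, w_{2i}⁆` associated to a family
`w : Fin (2*g) → L` (zero-indexed, so the `i`-th summand is `⁅w (2i), w (2i+1)⁆`). -/
def symplecticSum {L : Type*} [LieRing L] (g : ℕ) (w : Fin (2 * g) → L) : L :=
  ∑ i : Fin g, ⁅w ⟨2 * i.1, by have := i.2; omega⟩, w ⟨2 * i.1 + 1, by have := i.2; omega⟩⁆

open LieModule in
theorem lie_mem_lcs_succ {k L : Type*} [Field k] [LieRing L] [LieAlgebra k L] {n : ℕ} (a : L)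
    {b : L} (hb : b ∈ lowerCentralSeries k L L n) : ⁅a, b⁆ ∈ lowerCentralSeries k L L (n + 1) := by
  rw [lowerCentralSeries_succ]
  exact LieSubmodule.lie_mem_lie (LieSubmodule.mem_top a) hb

open LieModule in
/-- The inclusion `⁅Fil², Filᵐ⁆ ⊆ Filᵐ⁺²`, with `m = n + 1`. -/
theorem lie_mem_lcs_add_two {k L : Type*} [Field k] [LieRing L] [LieAlgebra k L] {n : ℕ} {a b : L}
    (ha : a ∈ lowerCentralSeries k L L 1) (hb : b ∈ lowerCentralSeries k L L n) :
    ⁅a, b⁆ ∈ lowerCentralSeries k L L (n + 2) := by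
  rw [lowerCentralSeries_succ, ← LieSubmodule.mem_toSubmodule,
    LieSubmodule.lieIdeal_oper_eq_linear_span'] at ha
  induction ha using Submodule.span_induction with
  | mem x hx =>
    obtain ⟨u, -, v, -, rfl⟩ := hx
    rw [lie_lie]
    exact sub_mem (lie_mem_lcs_succ u (lie_mem_lcs_succ v hb))
      (lie_mem_lcs_succ v (lie_mem_lcs_succ u hb))
  | zero => simp
  | add x y _ _ hx hy => rw [add_lie]; exact add_mem hx hy
  | smul c x _ hx => rw [smul_lie]; exact SMulMemClass.smul_mem c hx

open LieModule in
/-- If the `w j` span `L` modulo `⁅L, L⁆`, then every element of `F (n + 1)` is congruent modulo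
`F (n + 2)` to some `∑ j, ⁅w j, z j⁆` with all `z j ∈ F n`. -/
theorem exists_sum_lie_sub_mem {k L ι : Type*} [Field k] [LieRing L] [LieAlgebra k L] [Fintype ι]
    (w : ι → L)
    (hspan : Submodule.span k (Set.range w) ⊔ (lowerCentralSeries k L L 1).toSubmodule = ⊤)
    {n : ℕ} {y : L} (hy : y ∈ lowerCentralSeries k L L (n + 1)) :
    ∃ z : ι → L, (∀ j, z j ∈ lowerCentralSeries k L L n) ∧
      y - ∑ j, ⁅w j, z j⁆ ∈ lowerCentralSeries k L L (n + 2) := by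
  rw [lowerCentralSeries_succ, ← LieSubmodule.mem_toSubmodule,
    LieSubmodule.lieIdeal_oper_eq_linear_span'] at hy
  induction hy using Submodule.span_induction with
  | mem x hx =>
    obtain ⟨x, -, m, hm, rfl⟩ := hx
    have hx : x ∈ Submodule.span k (Set.range w) ⊔
        (lowerCentralSeries k L L 1).toSubmodule := hspan ▸ Submodule.mem_top
    obtain ⟨s, hs, t, ht, rfl⟩ := Submodule.mem_sup.1 hx
    obtain ⟨c, rfl⟩ := (Submodule.mem_span_range_iff_exists_fun k).1 hs
    refine ⟨fun j => c j • m, fun j => SMulMemClass.smul_mem _ hm, ?_⟩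
    have h : ⁅∑ j, c j • w j + t, m⁆ - ∑ j, ⁅w j, c j • m⁆ = ⁅t, m⁆ := by
      simp [add_lie, sum_lie]
    rw [h]
    exact lie_mem_lcs_add_two ht hm
  | zero => exact ⟨0, fun _ => zero_mem _, by simp⟩
  | add x y _ _ hx hy =>
    obtain ⟨z, hz, hxz⟩ := hx
    obtain ⟨z', hz', hyz⟩ := hy
    refine ⟨z + z', fun j => add_mem (hz j) (hz' j), ?_⟩
    convert add_mem hxz hyz using 1
    simp only [Pi.add_apply, lie_add, Finset.sum_add_distrib]
    abel
  | smul c x _ hx =>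
    obtain ⟨z, hz, hxz⟩ := hx
    refine ⟨c • z, fun j => SMulMemClass.smul_mem _ (hz j), ?_⟩
    convert SMulMemClass.smul_mem c hxz using 1
    simp [smul_sub, Finset.smul_sum]

theorem sum_fin_two_mul {M : Type*} [AddCommMonoid M] (g : ℕ) (f : Fin (2 * g) → M) :
    ∑ j, f j = ∑ i : Fin g, (f ⟨2 * i.1, by have := i.2; omega⟩ +
      f ⟨2 * i.1 + 1, by have := i.2; omega⟩) := by
  induction g with
  | zero => rfl
  | succ g ih =>
    rw [Fin.sum_univ_castSucc (n := g)]
    change ∑ j : Fin (2 * g + 1 + 1), f j = _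
    rw [Fin.sum_univ_castSucc, Fin.sum_univ_castSucc, add_assoc, ih fun j => f j.castSucc.castSucc]
    rfl

/-- Let `L` be a Lie algebra over a field `k` and `w₁, …, w_{2g}` (here `w 0, …, w (2g-1)`)
elements whose images span `L/⁅L,L⁆`, i.e. `L` is the sum of the span of the `wᵢ` and the
derived ideal `⁅L,L⁆ = Fil²L`.  For every `q ≥ 2` and every `y ∈ Fil^{q+1}L` there exist
`y₁, …, y_{2g} ∈ Fil^{q}L` with
`(∑ᵢ ⁅w_{2i−1}, w_{2i}⁆ + y) − ∑ᵢ ⁅w_{2i−1} + y_{2i−1}, w_{2i} + y_{2i}⁆ ∈ Fil^{q+2}L`.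
Here `Fil^{n+1}L = LieModule.lowerCentralSeries k L L n` is the lower central series. -/
theorem stmt_5 (k : Type*) [Field k] (L : Type*) [LieRing L] [LieAlgebra k L]
    (g : ℕ) (hg : 1 ≤ g) (w : Fin (2 * g) → L)
    (hspan : Submodule.span k (Set.range w) ⊔
        (LieModule.lowerCentralSeries k L L 1).toSubmodule = ⊤)
    (q : ℕ) (hq : 2 ≤ q) (y : L) (hy : y ∈ LieModule.lowerCentralSeries k L L q) :
    ∃ Y : Fin (2 * g) → L,
      (∀ i, Y i ∈ LieModule.lowerCentralSeries k L L (q - 1)) ∧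
      (symplecticSum g w + y) - symplecticSum g (fun i => w i + Y i) ∈
        LieModule.lowerCentralSeries k L L (q + 1) := by
  obtain ⟨n, rfl⟩ : ∃ n, q = n + 1 := ⟨q - 1, by omega⟩
  obtain ⟨z, hz, hyz⟩ := exists_sum_lie_sub_mem w hspan hy
  let Y : Fin (2 * g) → L := fun j =>
    if h : j.1 % 2 = 0 then -z ⟨j.1 + 1, by have := j.2; omega⟩
    else z ⟨j.1 - 1, by have := j.2; omega⟩
  have hY : ∀ j, Y j ∈ LieModule.lowerCentralSeries k L L n := by
    intro j
    dsimp only [Y]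
    split_ifs
    · exact neg_mem (hz _)
    · exact hz _
  have hY0 (i : Fin g) : Y ⟨2 * i.1, by have := i.2; omega⟩ =
      -z ⟨2 * i.1 + 1, by have := i.2; omega⟩ := by
    simp [Y]
  have hY1 (i : Fin g) : Y ⟨2 * i.1 + 1, by have := i.2; omega⟩ =
      z ⟨2 * i.1, by have := i.2; omega⟩ := by
    simp [Y, Nat.add_mod]
  refine ⟨Y, hY, ?_⟩
  have key : symplecticSum g (fun i => w i + Y i) =
      symplecticSum g w + ∑ j, ⁅w j, z j⁆ + symplecticSum g Y := by
    rw [sum_fin_two_mul]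
    simp only [symplecticSum, ← Finset.sum_add_distrib]
    refine Finset.sum_congr rfl fun i _ => ?_
    rw [hY0, hY1, add_lie, lie_add, lie_add, neg_lie _ (w _), lie_skew]
    abel
  have hquad : symplecticSum g Y ∈ LieModule.lowerCentralSeries k L L (n + 2) :=
    sum_mem fun i _ => lie_mem_lcs_add_two
      (LieModule.antitone_lowerCentralSeries k L L (by omega : 1 ≤ n) (hY _)) (hY _)
  rw [key]
  convert sub_mem hyz hquad using 1
  abel
end
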